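/- There exists ε₀ > 0 such that for every ε with 0 < ε < ε₀ the following holds in the ε-instance: if X' = (X'_1, X'_2, X'_3) is a complete EFX allocation whose product v_1(X'_1)·v_2(X'_2)·v_3(X'_3) is maximum among all complete EFX allocations, then the goods g_3, g_5 and g_6 are allocated to three distinct agents, X'_2 contains exactly one good of {g_3, g_5}, and X'_3 contains exactly one good of {g_5, g_6}. -/

import Mathlib

open Finset

/-- Additive value of a bundle `S` under per-good valuation `v`. -/
noncomputable def val {G : Type*} (v : G → ℝ) (S : Finset G) : ℝ := ∑ g ∈ S, v g

/-- `X` is EFX: no agent `i` strongly envies agent `j`, i.e. for every good `g`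
in `X j`, `v_i(X_i) ≥ v_i(X_j \ {g})`. -/
def EFX {G : Type*} [DecidableEq G] (v : Fin 3 → G → ℝ) (X : Fin 3 → Finset G) : Prop :=
  ∀ i j : Fin 3, ∀ g ∈ X j, val (v i) (X j \ {g}) ≤ val (v i) (X i)

/-- The valuations of the ε-instance: agent `i`'s value for good `g_{k+1}` is `vE ε i k`. -/
noncomputable def vE (ε : ℝ) : Fin 3 → Fin 7 → ℝ :=
  ![![ε ^ 3 + 6 * ε ^ 5, 2 * ε ^ 5, 10 - ε ^ 3, ε ^ 3, 10 - 2 * ε ^ 3,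
      10 + 3 * ε ^ 5, ε ^ 5],
    ![ε, 0, 10 - ε ^ 2 + ε ^ 6, 2 * ε ^ 2, 10, 0, ε - ε ^ 2],
    ![0, 0, 0, 0, 10 - ε ^ 4, 10, 2 * ε ^ 4]]

/-- The partial allocation `X₁ = {g₂,g₃,g₄}`, `X₂ = {g₁,g₅}`, `X₃ = {g₆}` (goods are
`0`-indexed: good `g_{k+1}` is `k : Fin 7`). -/
def XT : Fin 3 → Finset (Fin 7) :=
  ![{1, 2, 3}, {0, 4}, {5}]

/-!
For `ε < 1 / 10` the complete EFX allocation `({g₃,g₄,g₇}, {g₁,g₂,g₅}, {g₆})` has Nash product at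
least `10³`, so a maximiser does too. Every bundle is worth at most `31` to anybody, while the goods
outside `{g₃,g₅,g₆}`, `{g₃,g₅}`, `{g₅,g₆}` are together worth at most `1 / 4` to agents 1, 2, 3
respectively. As `31² / 4 < 10³`, each agent must therefore own one of her own large goods. There
are only three large goods for the three agents, so each agent owns exactly one.
-/

section FairDivision

variable {ι G : Type*}

theorem val_nonneg {v : G → ℝ} (hv : ∀ g, 0 ≤ v g) (S : Finset G) : 0 ≤ val v S :=
  sum_nonneg fun g _ => hv g

theorem val_mono {v : G → ℝ} (hv : ∀ g, 0 ≤ v g) {S T : Finset G} (hST : S ⊆ T) :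
    val v S ≤ val v T :=
  sum_le_sum_of_subset_of_nonneg hST fun g _ _ => hv g

theorem val_sdiff_singleton [DecidableEq G] (v : G → ℝ) {S : Finset G} {g : G} (hg : g ∈ S) :
    val v (S \ {g}) = val v S - v g := by
  rw [sdiff_singleton_eq_erase]
  exact eq_sub_of_add_eq (sum_erase_add S v hg)

theorem val_eq_sum_ite [Fintype G] [DecidableEq G] (v : G → ℝ) (S : Finset G) :
    val v S = ∑ g, if g ∈ S then v g else 0 := by
  rw [sum_ite_mem, univ_inter]
  rfl

theorem EFX_iff_val_le_add [DecidableEq G] {v : Fin 3 → G → ℝ} {X : Fin 3 → Finset G} :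
    EFX v X ↔ ∀ i j, ∀ g ∈ X j, val (v i) (X j) ≤ val (v i) (X i) + v i g :=
  forall₄_congr fun i _ _ hg => by rw [val_sdiff_singleton (v i) hg, sub_le_iff_le_add]

/-- The product of the agents' values for their own bundles. The Nash welfare is its
`Fintype.card ι`-th root, so both order allocations in the same way. -/
noncomputable def nashProduct [Fintype ι] (v : ι → G → ℝ) (X : ι → Finset G) : ℝ :=
  ∏ i, val (v i) (X i)

theorem nashProduct_le_val_mul_pow [Fintype ι] [Fintype G] {v : ι → G → ℝ}
    (hv : ∀ i g, 0 ≤ v i g) {M : ℝ} (hM : ∀ i, val (v i) univ ≤ M) (X : ι → Finset G) (i : ι) :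
    nashProduct v X ≤ val (v i) (X i) * M ^ (Fintype.card ι - 1) := by
  classical
  have others_le : ∏ j ∈ univ.erase i, val (v j) (X j) ≤ M ^ (Fintype.card ι - 1) := by
    rw [← card_univ, ← card_erase_of_mem (mem_univ i), ← prod_const]
    exact prod_le_prod (fun j _ => val_nonneg (hv j) _)
      fun j _ => (val_mono (hv j) (subset_univ _)).trans (hM j)
  calc nashProduct v X = val (v i) (X i) * ∏ j ∈ univ.erase i, val (v j) (X j) :=
        (mul_prod_erase univ _ (mem_univ i)).symm
    _ ≤ val (v i) (X i) * M ^ (Fintype.card ι - 1) :=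
        mul_le_mul_of_nonneg_left others_le (val_nonneg (hv i) _)

theorem inter_nonempty_of_lt_nashProduct [Fintype ι] [Fintype G] [DecidableEq G]
    {v : ι → G → ℝ} (hv : ∀ i g, 0 ≤ v i g) {M δ : ℝ} (hM : ∀ i, val (v i) univ ≤ M)
    {X : ι → Finset G} {i : ι} {L : Finset G} (hL : val (v i) Lᶜ ≤ δ)
    (hX : δ * M ^ (Fintype.card ι - 1) < nashProduct v X) : (X i ∩ L).Nonempty := by
  contrapose! hX
  have hM₀ : 0 ≤ M := (val_nonneg (hv i) univ).trans (hM i)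
  have own_le : val (v i) (X i) ≤ δ :=
    (val_mono (hv i) (subset_compl_iff_disjoint_right.mpr
      (disjoint_iff_inter_eq_empty.mpr hX))).trans hL
  calc nashProduct v X ≤ val (v i) (X i) * M ^ (Fintype.card ι - 1) :=
        nashProduct_le_val_mul_pow hv hM X i
    _ ≤ δ * M ^ (Fintype.card ι - 1) := mul_le_mul_of_nonneg_right own_le (pow_nonneg hM₀ _)

theorem inter_pair_nonempty [DecidableEq G] {S : Finset G} {a b : G} :
    (S ∩ {a, b}).Nonempty ↔ a ∈ S ∨ b ∈ S := by
  simp [Finset.Nonempty, and_or_left, exists_or]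

theorem card_inter_eq_one_of_pairwise_disjoint [Fintype ι] [DecidableEq G] {X : ι → Finset G}
    (hX : Pairwise (Function.onFun Disjoint X)) {B : Finset G} (hB : #B ≤ Fintype.card ι)
    (hne : ∀ i, (X i ∩ B).Nonempty) (i : ι) : #(X i ∩ B) = 1 := by
  have sum_le : ∑ i, #(X i ∩ B) ≤ ∑ _i : ι, 1 := calc
    ∑ i, #(X i ∩ B) = #(univ.biUnion fun i => X i ∩ B) :=
      (card_biUnion fun i _ j _ hij =>
        (hX hij).mono inter_subset_left inter_subset_left).symm
    _ ≤ #B := card_le_card (biUnion_subset.mpr fun _ _ => inter_subset_right)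
    _ ≤ ∑ _i : ι, 1 := by simpa using hB
  have one_le : ∀ i ∈ univ, 1 ≤ #(X i ∩ B) := fun i _ => (hne i).card_pos
  exact ((sum_eq_sum_iff_of_le one_le).mp ((sum_le_sum one_le).antisymm sum_le) i
    (mem_univ i)).symm

end FairDivision

section EpsInstance

variable {ε : ℝ}

theorem pow_succ_le_pow_div_ten (h₀ : 0 ≤ ε) (h₁ : ε ≤ 1 / 10) (n : ℕ) :
    ε ^ (n + 1) ≤ ε ^ n / 10 := by
  rw [pow_succ, div_eq_mul_one_div]
  exact mul_le_mul_of_nonneg_left h₁ (pow_nonneg h₀ n)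

theorem pow_six_pos_and_pow_le_pow_div_ten (h₀ : 0 < ε) (h₁ : ε < 1 / 10) :
    0 < ε ^ 6 ∧ ε ^ 6 ≤ ε ^ 5 / 10 ∧ ε ^ 5 ≤ ε ^ 4 / 10 ∧ ε ^ 4 ≤ ε ^ 3 / 10 ∧
      ε ^ 3 ≤ ε ^ 2 / 10 ∧ ε ^ 2 ≤ ε / 10 := by
  have step := pow_succ_le_pow_div_ten h₀.le h₁.le
  exact ⟨pow_pos h₀ 6, step 5, step 4, step 3, step 2, by simpa using step 1⟩

theorem vE_nonneg (h₀ : 0 < ε) (h₁ : ε < 1 / 10) (i : Fin 3) (g : Fin 7) : 0 ≤ vE ε i g := by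
  obtain ⟨_, _, _, _, _, _⟩ := pow_six_pos_and_pow_le_pow_div_ten h₀ h₁
  fin_cases i <;> fin_cases g <;> simp [vE] <;> linarith

theorem val_vE_univ_le (h₀ : 0 < ε) (h₁ : ε < 1 / 10) (i : Fin 3) : val (vE ε i) univ ≤ 31 := by
  obtain ⟨_, _, _, _, _, _⟩ := pow_six_pos_and_pow_le_pow_div_ten h₀ h₁
  fin_cases i <;> simp [_root_.val, vE, Fin.sum_univ_seven] <;> linarith

/-- The goods that are worth about `10` to each agent, the others being worth `O(ε)`. -/
def largeGoods : Fin 3 → Finset (Fin 7) :=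
  ![{2, 4, 5}, {2, 4}, {4, 5}]

theorem val_vE_compl_largeGoods_le (h₀ : 0 < ε) (h₁ : ε < 1 / 10) (i : Fin 3) :
    val (vE ε i) (largeGoods i)ᶜ ≤ 1 / 4 := by
  obtain ⟨_, _, _, _, _, _⟩ := pow_six_pos_and_pow_le_pow_div_ten h₀ h₁
  fin_cases i <;> simp [val_eq_sum_ite, Fin.sum_univ_seven, largeGoods, vE] <;> linarith

theorem inter_largeGoods_nonempty (h₀ : 0 < ε) (h₁ : ε < 1 / 10) {X : Fin 3 → Finset (Fin 7)}
    (hX : 1000 ≤ nashProduct (vE ε) X) (i : Fin 3) : (X i ∩ largeGoods i).Nonempty :=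
  inter_nonempty_of_lt_nashProduct (vE_nonneg h₀ h₁) (val_vE_univ_le h₀ h₁)
    (val_vE_compl_largeGoods_le h₀ h₁ i) (hX.trans_lt' (by norm_num))

theorem card_inter_two_four_five (h₀ : 0 < ε) (h₁ : ε < 1 / 10) {X : Fin 3 → Finset (Fin 7)}
    (hdisj : Pairwise (Function.onFun Disjoint X)) (hX : 1000 ≤ nashProduct (vE ε) X)
    (i : Fin 3) : #(X i ∩ {2, 4, 5}) = 1 :=
  have largeGoods_subset : ∀ i, largeGoods i ⊆ {2, 4, 5} := by decide
  card_inter_eq_one_of_pairwise_disjoint hdisj (by decide)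
    (fun i => (inter_largeGoods_nonempty h₀ h₁ hX i).mono
      (inter_subset_inter_left (largeGoods_subset i))) i

/-- A complete EFX allocation giving every agent a value of at least `10`. -/
def efxWitness : Fin 3 → Finset (Fin 7) :=
  ![{2, 3, 6}, {0, 1, 4}, {5}]

theorem val_vE_efxWitness (i j : Fin 3) :
    val (vE ε i) (efxWitness j) =
      !![10 + ε ^ 5, 10 - ε ^ 3 + 8 * ε ^ 5, 10 + 3 * ε ^ 5;
         10 + ε + ε ^ 6, 10 + ε, 0;
         2 * ε ^ 4, 10 - ε ^ 4, 10] i j := by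
  fin_cases i <;> fin_cases j <;> simp [_root_.val, vE, efxWitness] <;> ring

theorem EFX_efxWitness (h₀ : 0 < ε) (h₁ : ε < 1 / 10) : EFX (vE ε) efxWitness := by
  obtain ⟨_, _, _, _, _, _⟩ := pow_six_pos_and_pow_le_pow_div_ten h₀ h₁
  rw [EFX_iff_val_le_add]
  simp only [val_vE_efxWitness]
  intro i j
  -- The closest calls are agent 1 facing bundle 2 without `g₂`, where `5 * ε ^ 5 ≤ ε ^ 3` is
  -- needed, and agent 2 facing bundle 1 without `g₄`, where `ε ^ 6 ≤ 2 * ε ^ 2` is needed.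
  fin_cases i <;> fin_cases j <;> simp [efxWitness, vE] <;> grind

theorem thousand_le_nashProduct_efxWitness (h₀ : 0 ≤ ε) :
    1000 ≤ nashProduct (vE ε) efxWitness := by
  have ten_le (i : Fin 3) : 10 ≤ val (vE ε i) (efxWitness i) := by
    rw [val_vE_efxWitness]
    fin_cases i <;> simp [h₀]
  calc (1000 : ℝ) = ∏ _i : Fin 3, 10 := by norm_num
    _ ≤ nashProduct (vE ε) efxWitness := prod_le_prod (fun _ _ => by norm_num) fun i _ => ten_le i

theorem eps_instance_max_nash_structure_general (h₀ : 0 < ε) (h₁ : ε < 1 / 10)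
    {X : Fin 3 → Finset (Fin 7)} (hdisj : ∀ i j, i ≠ j → Disjoint (X i) (X j))
    (hmax : ∀ Y : Fin 3 → Finset (Fin 7), (∀ i j, i ≠ j → Disjoint (Y i) (Y j)) →
      Y 0 ∪ Y 1 ∪ Y 2 = univ → EFX (vE ε) Y → nashProduct (vE ε) Y ≤ nashProduct (vE ε) X) :
    (∀ i, ¬ (2 ∈ X i ∧ 4 ∈ X i)) ∧ (∀ i, ¬ (2 ∈ X i ∧ 5 ∈ X i)) ∧ (∀ i, ¬ (4 ∈ X i ∧ 5 ∈ X i)) ∧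
      ((2 ∈ X 1 ∧ 4 ∉ X 1) ∨ (2 ∉ X 1 ∧ 4 ∈ X 1)) ∧
      ((4 ∈ X 2 ∧ 5 ∉ X 2) ∨ (4 ∉ X 2 ∧ 5 ∈ X 2)) := by
  have nash_ge : 1000 ≤ nashProduct (vE ε) X :=
    (thousand_le_nashProduct_efxWitness h₀.le).trans
      (hmax efxWitness (by decide) (by decide) (EFX_efxWitness h₀ h₁))
  have card_eq_one := card_inter_two_four_five h₀ h₁ (fun i j => hdisj i j) nash_ge
  have not_both {i : Fin 3} {g h : Fin 7} (hg : g ∈ ({2, 4, 5} : Finset (Fin 7)))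
      (hh : h ∈ ({2, 4, 5} : Finset (Fin 7))) (hgh : g ≠ h) : ¬ (g ∈ X i ∧ h ∈ X i) :=
    fun ⟨hgX, hhX⟩ => hgh <| card_le_one.mp (card_eq_one i).le
      g (mem_inter.mpr ⟨hgX, hg⟩) h (mem_inter.mpr ⟨hhX, hh⟩)
  have not_two_four (i) : ¬ (2 ∈ X i ∧ 4 ∈ X i) := not_both (by decide) (by decide) (by decide)
  have not_two_five (i) : ¬ (2 ∈ X i ∧ 5 ∈ X i) := not_both (by decide) (by decide) (by decide)
  have not_four_five (i) : ¬ (4 ∈ X i ∧ 5 ∈ X i) := not_both (by decide) (by decide) (by decide)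
  have two_or_four : 2 ∈ X 1 ∨ 4 ∈ X 1 :=
    inter_pair_nonempty.mp (inter_largeGoods_nonempty h₀ h₁ nash_ge 1)
  have four_or_five : 4 ∈ X 2 ∨ 5 ∈ X 2 :=
    inter_pair_nonempty.mp (inter_largeGoods_nonempty h₀ h₁ nash_ge 2)
  have exactly_one {p q : Prop} (hor : p ∨ q) (hnand : ¬ (p ∧ q)) :
      (p ∧ ¬ q) ∨ (¬ p ∧ q) := by tauto
  exact ⟨not_two_four, not_two_five, not_four_five,
    exactly_one two_or_four (not_two_four 1), exactly_one four_or_five (not_four_five 2)⟩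

end EpsInstance

/-- For all sufficiently small `ε > 0`: any complete EFX allocation of the ε-instance with
maximum Nash-welfare product allocates `g₃`, `g₅`, `g₆` (indices `2`, `4`, `5`) to three
distinct agents, gives agent 2 (index `1`) exactly one of `{g₃,g₅}`, and gives agent 3
(index `2`) exactly one of `{g₅,g₆}`. -/
theorem eps_instance_max_nash_structure :
    ∃ ε₀ : ℝ, 0 < ε₀ ∧ ∀ ε : ℝ, 0 < ε → ε < ε₀ →
      ∀ X' : Fin 3 → Finset (Fin 7),
        (∀ i j, i ≠ j → Disjoint (X' i) (X' j)) →
        X' 0 ∪ X' 1 ∪ X' 2 = Finset.univ →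
        EFX (vE ε) X' →
        (∀ Y : Fin 3 → Finset (Fin 7),
          (∀ i j, i ≠ j → Disjoint (Y i) (Y j)) →
          Y 0 ∪ Y 1 ∪ Y 2 = Finset.univ →
          EFX (vE ε) Y →
          val (vE ε 0) (Y 0) * val (vE ε 1) (Y 1) * val (vE ε 2) (Y 2)
            ≤ val (vE ε 0) (X' 0) * val (vE ε 1) (X' 1) * val (vE ε 2) (X' 2)) →
        ((∀ i : Fin 3, ¬ ((2 : Fin 7) ∈ X' i ∧ (4 : Fin 7) ∈ X' i)) ∧
         (∀ i : Fin 3, ¬ ((2 : Fin 7) ∈ X' i ∧ (5 : Fin 7) ∈ X' i)) ∧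
         (∀ i : Fin 3, ¬ ((4 : Fin 7) ∈ X' i ∧ (5 : Fin 7) ∈ X' i)) ∧
         (((2 : Fin 7) ∈ X' 1 ∧ (4 : Fin 7) ∉ X' 1) ∨
           ((2 : Fin 7) ∉ X' 1 ∧ (4 : Fin 7) ∈ X' 1)) ∧
         (((4 : Fin 7) ∈ X' 2 ∧ (5 : Fin 7) ∉ X' 2) ∨
           ((4 : Fin 7) ∉ X' 2 ∧ (5 : Fin 7) ∈ X' 2))) := by
  refine ⟨1 / 10, by norm_num, fun ε h₀ h₁ X hdisj _ _ hmax => ?_⟩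
  exact eps_instance_max_nash_structure_general h₀ h₁ hdisj
    (by simpa only [nashProduct, Fin.prod_univ_three] using hmax)
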